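/- arXiv:2209.06448 — 3 statements merged into one kernel-verified Lean document; each statement's English description precedes it below -/
import Mathlib

section
/- If the set V of variables is infinite, then every LIF expression is equivalent to a LIF expression in which the composition operator ; does not occur. -/
/-- A binary relation on valuations (BRV). -/
abbrev BRV (V dom : Type*) := Set ((V → dom) × (V → dom))

namespace BRV

variable {V dom : Type*}

/-- `ν1` and `ν2` agree on the set `Y` of variables. -/
def AgreeOn (ν1 ν2 : V → dom) (Y : Set V) : Prop := ∀ y ∈ Y, ν1 y = ν2 y

/-- Composition of BRVs. -/
def comp (A B : BRV V dom) : BRV V dom :=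
  {p | ∃ ν3, (p.1, ν3) ∈ A ∧ (ν3, p.2) ∈ B}

/-- Left cylindrification. -/
def cyll (Z : Set V) (A : BRV V dom) : BRV V dom :=
  {p | ∃ ν1', (ν1', p.2) ∈ A ∧ AgreeOn ν1' p.1 Zᶜ}

/-- Right cylindrification. -/
def cylr (Z : Set V) (A : BRV V dom) : BRV V dom :=
  {p | ∃ ν2', (p.1, ν2') ∈ A ∧ AgreeOn ν2' p.2 Zᶜ}

/-- Left selection. -/
def sell (x y : V) (A : BRV V dom) : BRV V dom := {p ∈ A | p.1 x = p.1 y}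

/-- Right selection. -/
def selr (x y : V) (A : BRV V dom) : BRV V dom := {p ∈ A | p.2 x = p.2 y}

/-- Left-to-right selection. -/
def sellr (x y : V) (A : BRV V dom) : BRV V dom := {p ∈ A | p.1 x = p.2 y}


end BRV


/-- A global BRV: a function from interpretations to BRVs.
`I` is the type of interpretations. -/
abbrev GBRV (V dom I : Type*) := I → BRV V dom

/-- Semantic outputs of a global BRV. -/
def Osem {V dom I : Type*} (Q : GBRV V dom I) : Set V :=
  {x | ∃ (D : I) (p : (V → dom) × (V → dom)), p ∈ Q D ∧ p.1 x ≠ p.2 x}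

/-- `X` determines `Q` on `Y`. -/
def Determines {V dom I : Type*} (Q : GBRV V dom I) (X Y : Set V) : Prop :=
  ∀ (D : I), ∀ p ∈ Q D, ∀ ν1' : V → dom, BRV.AgreeOn ν1' p.1 X →
    ∃ ν2' : V → dom, BRV.AgreeOn ν2' p.2 Y ∧ (ν1', ν2') ∈ Q D

/-- Semantic inputs of a global BRV. -/
def Isem {V dom I : Type*} (Q : GBRV V dom I) : Set V :=
  {x | ¬ Determines Q ({x}ᶜ) (Osem Q)}

-- `ν` patched with the `X`-valuation `ν'` (the values of `ν'` outside `X` are irrelevant).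
open Classical in
noncomputable def patch {V dom : Type*} (ν ν' : V → dom) (X : Set V) : V → dom :=
  fun v => if v ∈ X then ν' v else ν v

/-- A global BRV is inertially cylindrified on `X`. -/
def InertCyl {V dom I : Type*} (Q : GBRV V dom I) (X : Set V) : Prop :=
  (∀ x ∈ X, x ∉ Osem Q) ∧
  ∀ (D : I), ∀ p ∈ Q D, ∀ ν' : V → dom,
    (patch p.1 ν' X, patch p.2 ν' X) ∈ Q D

/-- A module vocabulary: each module name has an arity and an input arity. -/
structure Vocab (Name : Type*) where
  ar : Name → ℕ
  iar : Name → ℕ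
  iar_le : ∀ M, iar M ≤ ar M

/-- LIF expressions over a module vocabulary. -/
inductive LIF (Name V : Type*) (voc : Vocab Name) : Type _ where
  | idE : LIF Name V voc
  | atom (M : Name) (xs ys : List V)
      (hx : xs.length = voc.iar M) (hy : ys.length = voc.ar M - voc.iar M) :
      LIF Name V voc
  | union (a b : LIF Name V voc) : LIF Name V voc
  | inter (a b : LIF Name V voc) : LIF Name V voc
  | diff  (a b : LIF Name V voc) : LIF Name V voc
  | comp  (a b : LIF Name V voc) : LIF Name V voc
  | cyll (Z : Finset V) (a : LIF Name V voc) : LIF Name V voc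
  | cylr (Z : Finset V) (a : LIF Name V voc) : LIF Name V voc
  | sellr (x y : V) (a : LIF Name V voc) : LIF Name V voc
  | sell (x y : V) (a : LIF Name V voc) : LIF Name V voc
  | selr (x y : V) (a : LIF Name V voc) : LIF Name V voc

/-- An interpretation assigns to each module name a relation over `dom`,
represented as a set of lists. -/
abbrev Interp (Name dom : Type*) := Name → Set (List dom)

namespace LIF

variable {Name V dom : Type*} {voc : Vocab Name}

/-- The semantics of a LIF expression under an interpretation. -/
def sem (D : Interp Name dom) : LIF Name V voc → BRV V dom
  | .idE => {p | p.1 = p.2}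
  | .atom M xs ys _ _ =>
      {p | (xs.map p.1 ++ ys.map p.2) ∈ D M ∧ BRV.AgreeOn p.1 p.2 {v | v ∈ ys}ᶜ}
  | .union a b => a.sem D ∪ b.sem D
  | .inter a b => a.sem D ∩ b.sem D
  | .diff a b  => a.sem D \ b.sem D
  | .comp a b  => BRV.comp (a.sem D) (b.sem D)
  | .cyll Z a  => BRV.cyll (↑Z) (a.sem D)
  | .cylr Z a  => BRV.cylr (↑Z) (a.sem D)
  | .sellr x y a => BRV.sellr x y (a.sem D)
  | .sell x y a  => BRV.sell x y (a.sem D)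
  | .selr x y a  => BRV.selr x y (a.sem D)

/-- The global BRV induced by a LIF expression. -/
def gsem (dom : Type*) (α : LIF Name V voc) : GBRV V dom (Interp Name dom) :=
  fun D => α.sem D

end LIF

/-- The composition operator does not occur in the expression. -/
def LIF.NoComp {Name V : Type*} {voc : Vocab Name} : LIF Name V voc → Prop
  | .idE => True
  | .atom _ _ _ _ _ => True
  | .union a b => a.NoComp ∧ b.NoComp
  | .inter a b => a.NoComp ∧ b.NoComp
  | .diff a b  => a.NoComp ∧ b.NoComp
  | .comp _ _  => False
  | .cyll _ a  => a.NoComp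
  | .cylr _ a  => a.NoComp
  | .sellr _ _ a => a.NoComp
  | .sell _ _ a  => a.NoComp
  | .selr _ _ a  => a.NoComp

/-!
Suppose that `A` and `B` only relate valuations agreeing outside a finite set `W`. Since there are
infinitely many variables, `W` has an injective copy `e '' W` disjoint from `W`. A pair `(ν1, ν2)`
of valuations agreeing outside `W` lies in `A ; B` if and only if the copies can be given, on the
right-hand side, the values on `W` of an intermediate valuation of the composition.
Cylindrifications and selections turn `A` into the condition that the copies hold an output of `A`,
and `B` into the condition that they hold an input of `B`; intersecting the two and cylindrifying
the copies away expresses the composition.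
-/

theorem exists_embedding_forall_notMem {V : Type*} [Infinite V] (W : Finset V) :
    ∃ e : V ↪ V, ∀ x, e x ∉ W := by
  obtain ⟨f⟩ := Cardinal.eq.1 (Cardinal.mk_compl_finset_of_infinite W).symm
  exact ⟨f.toEmbedding.trans (Function.Embedding.subtype _), fun x => (f x).2⟩

namespace BRV.AgreeOn

variable {V dom : Type*} {ν1 ν2 ν3 : V → dom} {Y Z : Set V}

theorem symm (h : AgreeOn ν1 ν2 Y) : AgreeOn ν2 ν1 Y :=
  fun y hy => (h y hy).symm

theorem trans (h : AgreeOn ν1 ν2 Y) (h' : AgreeOn ν2 ν3 Y) : AgreeOn ν1 ν3 Y :=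
  fun y hy => (h y hy).trans (h' y hy)

theorem mono (hYZ : Y ⊆ Z) (h : AgreeOn ν1 ν2 Z) : AgreeOn ν1 ν2 Y :=
  fun y hy => h y (hYZ hy)

end BRV.AgreeOn

namespace LIF

variable {Name V dom : Type*} {voc : Vocab Name} {D : Interp Name dom} {α β : LIF Name V voc}
  {W : Finset V} {ν1 ν2 : V → dom}

open Classical in
/-- Syntactic output variables of an expression: a finite set outside of which the two valuations
of any pair in the semantics agree. It may be larger than the set `Osem` of semantic outputs. -/
noncomputable def outputs : LIF Name V voc → Finset V
  | .idE => ∅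
  | .atom _ _ ys _ _ => ys.toFinset
  | .union α β => α.outputs ∪ β.outputs
  | .inter α _ => α.outputs
  | .diff α _ => α.outputs
  | .comp α β => α.outputs ∪ β.outputs
  | .cyll Z α => Z ∪ α.outputs
  | .cylr Z α => Z ∪ α.outputs
  | .sellr _ _ α => α.outputs
  | .sell _ _ α => α.outputs
  | .selr _ _ α => α.outputs

theorem agreeOn_compl_outputs (h : (ν1, ν2) ∈ α.sem D) :
    BRV.AgreeOn ν1 ν2 (↑α.outputs)ᶜ := by
  induction α generalizing ν1 ν2 with
  | idE => exact fun x _ => congrFun h x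
  | atom => simpa [outputs] using h.2
  | union α β ihα ihβ =>
    simp only [outputs, Finset.coe_union, Set.compl_union]
    exact h.elim (fun h => (ihα h).mono Set.inter_subset_left)
      fun h => (ihβ h).mono Set.inter_subset_right
  | comp α β ihα ihβ =>
    obtain ⟨ν3, hα, hβ⟩ := h
    simp only [outputs, Finset.coe_union, Set.compl_union]
    exact ((ihα hα).mono Set.inter_subset_left).trans ((ihβ hβ).mono Set.inter_subset_right)
  | cyll Z α ih =>
    obtain ⟨μ, hμ, hμν⟩ := h
    simp only [outputs, Finset.coe_union, Set.compl_union]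
    exact (hμν.symm.mono Set.inter_subset_left).trans ((ih hμ).mono Set.inter_subset_right)
  | cylr Z α ih =>
    obtain ⟨μ, hμ, hμν⟩ := h
    simp only [outputs, Finset.coe_union, Set.compl_union]
    exact ((ih hμ).mono Set.inter_subset_right).trans (hμν.mono Set.inter_subset_left)
  | inter α _ ih => exact ih h.1
  | diff α _ ih => exact ih h.1
  | sellr x y α ih => exact ih h.1
  | sell x y α ih => exact ih h.1
  | selr x y α ih => exact ih h.1

/-- Simultaneous right selection of `x = e x` for all `x` in the list `L`. -/
def selrList (e : V → V) (L : List V) (α : LIF Name V voc) : LIF Name V voc :=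
  L.foldr (fun x => .selr x (e x)) α

theorem mem_sem_selrList {e : V → V} {L : List V} :
    (ν1, ν2) ∈ (selrList e L α).sem D ↔ (ν1, ν2) ∈ α.sem D ∧ ∀ x ∈ L, ν2 x = ν2 (e x) := by
  induction L with
  | nil => simp [selrList]
  | cons x L ih =>
    rw [List.forall_mem_cons, ← and_assoc, and_right_comm]
    exact and_congr_left' ih

theorem noComp_selrList {e : V → V} {L : List V} (hα : α.NoComp) : (selrList e L α).NoComp := by
  induction L with
  | nil => exact hα
  | cons _ _ ih => exact ih

/-- Simultaneous left-to-right selection of `x = e x` for all `x` in the list `L`. -/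
def sellrList (e : V → V) (L : List V) (α : LIF Name V voc) : LIF Name V voc :=
  L.foldr (fun x => .sellr x (e x)) α

theorem mem_sem_sellrList {e : V → V} {L : List V} :
    (ν1, ν2) ∈ (sellrList e L α).sem D ↔ (ν1, ν2) ∈ α.sem D ∧ ∀ x ∈ L, ν1 x = ν2 (e x) := by
  induction L with
  | nil => simp [sellrList]
  | cons x L ih =>
    rw [List.forall_mem_cons, ← and_assoc, and_right_comm]
    exact and_congr_left' ih

theorem noComp_sellrList {e : V → V} {L : List V} (hα : α.NoComp) : (sellrList e L α).NoComp := by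
  induction L with
  | nil => exact hα
  | cons _ _ ih => exact ih

variable {e : V ↪ V}

/-- The expression `α` with its output on `W` moved to the copies `e x` of the variables `x ∈ W`;
the second valuation becomes arbitrary on `W`. -/
noncomputable def moveOutput (W : Finset V) (e : V ↪ V) (α : LIF Name V voc) : LIF Name V voc :=
  .cylr W (selrList e W.toList (.cylr (W.map e) α))

theorem mem_sem_moveOutput (he : ∀ x ∈ W, e x ∉ W) :
    (ν1, ν2) ∈ (moveOutput W e α).sem D ↔
      ∃ μ, (ν1, μ) ∈ α.sem D ∧ BRV.AgreeOn μ ν2 (↑W ∪ e '' W)ᶜ ∧ ∀ x ∈ W, ν2 (e x) = μ x := by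
  classical
  have notMem_image {x : V} (hx : x ∈ W) : x ∉ e '' W := by
    rintro ⟨y, hy, rfl⟩
    exact he y hy hx
  simp only [moveOutput, sem, BRV.cylr, Set.mem_ofPred_eq, mem_sem_selrList, Finset.mem_toList,
    Finset.coe_map]
  constructor
  · rintro ⟨ρ, ⟨⟨μ, hμ, hμρ⟩, hρ⟩, hρν⟩
    refine ⟨μ, hμ, ?_, fun x hx => ?_⟩
    · rw [Set.compl_union]
      exact (hμρ.mono Set.inter_subset_right).trans (hρν.mono Set.inter_subset_left)
    · rw [hμρ x (notMem_image hx), hρ x hx, hρν (e x) (he x hx)]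
  · rintro ⟨μ, hμ, hμν, hcopy⟩
    refine ⟨W.piecewise μ ν2, ⟨⟨μ, hμ, fun x hx => ?_⟩, fun x hx => ?_⟩,
      fun x hx => W.piecewise_eq_of_notMem _ _ hx⟩
    · by_cases hxW : x ∈ W
      · rw [W.piecewise_eq_of_mem _ _ hxW]
      · rw [W.piecewise_eq_of_notMem _ _ hxW, hμν x (by simp_all)]
    · rw [W.piecewise_eq_of_mem _ _ hx, W.piecewise_eq_of_notMem _ _ (he x hx), hcopy x hx]

theorem noComp_moveOutput (hα : α.NoComp) : (moveOutput W e α).NoComp :=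
  noComp_selrList (α := .cylr _ α) hα

/-- The expression `α` with its input on `W` moved to the copies `e x` of the variables `x ∈ W`,
read in the second valuation; the first valuation becomes arbitrary on `W`. -/
noncomputable def moveInput (W : Finset V) (e : V ↪ V) (α : LIF Name V voc) : LIF Name V voc :=
  .cyll W (sellrList e W.toList (.cylr (W.map e) α))

theorem mem_sem_moveInput :
    (ν1, ν2) ∈ (moveInput W e α).sem D ↔
      ∃ μ ρ, (μ, ρ) ∈ α.sem D ∧ BRV.AgreeOn μ ν1 (↑W)ᶜ ∧ BRV.AgreeOn ρ ν2 (e '' W)ᶜ ∧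
        ∀ x ∈ W, ν2 (e x) = μ x := by
  simp only [moveInput, sem, BRV.cyll, BRV.cylr, Set.mem_ofPred_eq, mem_sem_sellrList,
    Finset.mem_toList, Finset.coe_map]
  constructor
  · rintro ⟨μ, ⟨⟨ρ, hμρ, hρ⟩, hcopy⟩, hμ⟩
    exact ⟨μ, ρ, hμρ, hμ, hρ, fun x hx => (hcopy x hx).symm⟩
  · rintro ⟨μ, ρ, hμρ, hμ, hρ, hcopy⟩
    exact ⟨μ, ⟨⟨ρ, hμρ, hρ⟩, fun x hx => (hcopy x hx).symm⟩, hμ⟩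

theorem noComp_moveInput (hα : α.NoComp) : (moveInput W e α).NoComp :=
  noComp_sellrList (α := .cylr _ α) hα

theorem mem_sem_cyll_idE :
    (ν1, ν2) ∈ (.cyll W .idE : LIF Name V voc).sem D ↔ BRV.AgreeOn ν1 ν2 (↑W)ᶜ := by
  constructor
  · rintro ⟨μ, hμ : μ = ν2, h⟩
    exact hμ ▸ h.symm
  · exact fun h => ⟨ν2, rfl, h.symm⟩

/-- A composition-free substitute for `.comp α β`, when the outputs of `α` and `β` lie in `W`: the
intermediate valuation is stored in the copies `e x` of the variables `x ∈ W`. -/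
noncomputable def compViaCopies (W : Finset V) (e : V ↪ V) (α β : LIF Name V voc) :
    LIF Name V voc :=
  .inter (.cyll W .idE) (.cylr (W.map e) (.inter (moveOutput W e α) (moveInput W e β)))

theorem noComp_compViaCopies (hα : α.NoComp) (hβ : β.NoComp) : (compViaCopies W e α β).NoComp :=
  ⟨trivial, noComp_moveOutput hα, noComp_moveInput hβ⟩

theorem mem_sem_compViaCopies :
    (ν1, ν2) ∈ (compViaCopies W e α β).sem D ↔
      BRV.AgreeOn ν1 ν2 (↑W)ᶜ ∧ ∃ ρ, ((ν1, ρ) ∈ (moveOutput W e α).sem D ∧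
        (ν1, ρ) ∈ (moveInput W e β).sem D) ∧ BRV.AgreeOn ρ ν2 (e '' W)ᶜ := by
  rw [← Finset.coe_map, ← mem_sem_cyll_idE]
  rfl

theorem mem_sem_compViaCopies_of_mem_comp (he : ∀ x ∈ W, e x ∉ W)
    (hα : ∀ p ∈ α.sem D, BRV.AgreeOn p.1 p.2 (↑W)ᶜ)
    (hβ : ∀ p ∈ β.sem D, BRV.AgreeOn p.1 p.2 (↑W)ᶜ)
    (h : (ν1, ν2) ∈ BRV.comp (α.sem D) (β.sem D)) :
    (ν1, ν2) ∈ (compViaCopies W e α β).sem D := by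
  classical
  obtain ⟨μ, h1, h2⟩ := h
  have hμ1 : BRV.AgreeOn ν1 μ (↑W)ᶜ := hα _ h1
  have hμ2 : BRV.AgreeOn μ ν2 (↑W)ᶜ := hβ _ h2
  let ρ := (e '' W).piecewise (Function.extend e μ ν2) ν2
  have hcopy (x : V) (hx : x ∈ W) : ρ (e x) = μ x := by
    simp only [ρ, Set.piecewise_eq_of_mem _ _ _ (Set.mem_image_of_mem e hx),
      e.injective.extend_apply]
  have hρ : BRV.AgreeOn ρ ν2 (e '' W)ᶜ := fun x hx => Set.piecewise_eq_of_notMem _ _ _ hx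
  have hμρ : BRV.AgreeOn μ ρ (↑W ∪ e '' W)ᶜ := by
    rw [Set.compl_union]
    exact (hμ2.mono Set.inter_subset_left).trans (hρ.symm.mono Set.inter_subset_right)
  exact mem_sem_compViaCopies.2 ⟨hμ1.trans hμ2, ρ,
    ⟨(mem_sem_moveOutput he).2 ⟨μ, h1, hμρ, hcopy⟩,
      mem_sem_moveInput.2 ⟨μ, ν2, h2, hμ1.symm, hρ.symm, hcopy⟩⟩, hρ⟩

theorem mem_comp_of_mem_sem_compViaCopies (he : ∀ x ∈ W, e x ∉ W)
    (hα : ∀ p ∈ α.sem D, BRV.AgreeOn p.1 p.2 (↑W)ᶜ)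
    (hβ : ∀ p ∈ β.sem D, BRV.AgreeOn p.1 p.2 (↑W)ᶜ)
    (h : (ν1, ν2) ∈ (compViaCopies W e α β).sem D) :
    (ν1, ν2) ∈ BRV.comp (α.sem D) (β.sem D) := by
  obtain ⟨h12, ρ, ⟨hout, hin⟩, hρ⟩ := mem_sem_compViaCopies.1 h
  obtain ⟨μ, hμ, -, hμcopy⟩ := (mem_sem_moveOutput he).1 hout
  obtain ⟨μ', κ, hμ'κ, hμ', hκρ, hμ'copy⟩ := mem_sem_moveInput.1 hin
  have hμμ' : μ' = μ := by
    ext x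
    by_cases hx : x ∈ W
    · rw [← hμcopy x hx, ← hμ'copy x hx]
    · exact (hμ'.trans (hα _ hμ)) x hx
  have hκ : κ = ν2 := by
    ext x
    by_cases hx : x ∈ W
    · exact (hκρ.trans hρ) x fun ⟨y, hy, hyx⟩ => he y hy (hyx ▸ hx)
    · exact ((hβ _ hμ'κ).symm.trans (hμ'.trans h12)) x hx
  subst hμμ' hκ
  exact ⟨_, hμ, hμ'κ⟩

theorem sem_compViaCopies (he : ∀ x ∈ W, e x ∉ W)
    (hα : ∀ p ∈ α.sem D, BRV.AgreeOn p.1 p.2 (↑W)ᶜ)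
    (hβ : ∀ p ∈ β.sem D, BRV.AgreeOn p.1 p.2 (↑W)ᶜ) :
    (compViaCopies W e α β).sem D = BRV.comp (α.sem D) (β.sem D) :=
  Set.Subset.antisymm (fun _ => mem_comp_of_mem_sem_compViaCopies he hα hβ)
    fun _ => mem_sem_compViaCopies_of_mem_comp he hα hβ

/-- An injective renaming of the variables to variables outside `W`. -/
noncomputable def freshCopy [Infinite V] (W : Finset V) : V ↪ V :=
  (exists_embedding_forall_notMem W).choose

theorem freshCopy_notMem [Infinite V] (W : Finset V) (x : V) : freshCopy W x ∉ W :=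
  (exists_embedding_forall_notMem W).choose_spec x

/-- Replaces every composition in an expression by its composition-free substitute. -/
noncomputable def elimComp [Infinite V] : LIF Name V voc → LIF Name V voc
  | .idE => .idE
  | .atom M xs ys hx hy => .atom M xs ys hx hy
  | .union α β => .union α.elimComp β.elimComp
  | .inter α β => .inter α.elimComp β.elimComp
  | .diff α β => .diff α.elimComp β.elimComp
  | .comp α β =>
    let W := (α.comp β).outputs
    compViaCopies W (freshCopy W) α.elimComp β.elimComp
  | .cyll Z α => .cyll Z α.elimComp
  | .cylr Z α => .cylr Z α.elimComp
  | .sellr x y α => .sellr x y α.elimComp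
  | .sell x y α => .sell x y α.elimComp
  | .selr x y α => .selr x y α.elimComp

theorem noComp_elimComp [Infinite V] (α : LIF Name V voc) : α.elimComp.NoComp := by
  induction α with
  | comp α β ihα ihβ => exact noComp_compViaCopies ihα ihβ
  | _ => simp_all [elimComp, NoComp]

theorem sem_elimComp [Infinite V] (D : Interp Name dom) (α : LIF Name V voc) :
    α.elimComp.sem D = α.sem D := by
  induction α with
  | comp α β ihα ihβ =>
    rw [elimComp, sem_compViaCopies (fun x _ => freshCopy_notMem _ x), ihα, ihβ, sem]
    · rintro ⟨ν1, ν2⟩ h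
      exact (agreeOn_compl_outputs (ihα ▸ h)).mono (by simp [outputs])
    · rintro ⟨ν1, ν2⟩ h
      exact (agreeOn_compl_outputs (ihβ ▸ h)).mono (by simp [outputs])
  | _ => simp_all [elimComp, sem]

end LIF

theorem stmt17_general {Name V : Type*} {voc : Vocab Name} [Infinite V] (α : LIF Name V voc) :
    ∃ β : LIF Name V voc, β.NoComp ∧
      ∀ (dom : Type*) (D : Interp Name dom), α.sem D = β.sem D :=
  ⟨α.elimComp, α.noComp_elimComp, fun _ D => (α.sem_elimComp D).symm⟩

theorem stmt17 {Name V : Type*} [Nonempty Name] {voc : Vocab Name} [Infinite V]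
    (dom : Type*) [Countable dom] [Infinite dom]
    (α : LIF Name V voc) :
    ∃ β : LIF Name V voc, β.NoComp ∧ ∀ D : Interp Name dom, α.sem D = β.sem D := by
  obtain ⟨β, hβ, h⟩ := stmt17_general α
  exact ⟨β, hβ, h dom⟩
end

section
/- Suppose the set of variables V = {x1,…,xn} is finite with n ≥ 2, and the module vocabulary consists of a single module name R with ar(R) = iar(R) = 2. Then there exists a LIF expression α_{2n} such that for every interpretation D, ⟦α_{2n}⟧_D = {(ν1,ν2) : ν1(V) ∪ ν2(V) is a 2n-clique in D(R)}, where ν(V) denotes the image of V under the valuation ν. -/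
/-- `L` is a `k`-clique in the binary relation `R` (represented as a set of
two-element lists): `L` has exactly `k` elements and all distinct `a, b ∈ L`
are related. -/
def IsKClique {dom : Type*} (R : Set (List dom)) (L : Set dom) (k : ℕ) : Prop :=
  L.ncard = k ∧ ∀ a ∈ L, ∀ b ∈ L, a ≠ b → [a, b] ∈ R

/-!
All arguments of the module `R` are inputs, so an atom `R(x, y;)` only relates values of a single
valuation. Composition provides such a valuation: an intermediate `μ` is linked by left-to-right
selections to `ν₁` on its left and to `ν₂` on its right, so it can collect values from both. Since
there are at least two variables, `μ` can hold any two of the `2n` values of the pair `(ν₁, ν₂)` at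
once, where they are tested to be distinct and related by `R`.
-/

theorem eq_sumElim_comp_iff {ι α β γ : Type*} {f : ι → α ⊕ β} {g : α → γ} {h : β → γ} {k : ι → γ} :
    k = Sum.elim g h ∘ f ↔
      (∀ i a, f i = .inl a → g a = k i) ∧ ∀ i b, f i = .inr b → k i = h b := by
  rw [funext_iff, ← forall_and]
  refine forall_congr' fun i => ?_
  cases hi : f i <;> simp [hi, eq_comm]

namespace LIF

variable {Name V dom : Type*} {voc : Vocab Name}

/-- The test that the values of `x` and `y` are distinct and related by the binary module `M`. -/
def edge (M : Name) (har : voc.ar M = 2) (hiar : voc.iar M = 2) (x y : V) : LIF Name V voc :=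
  .diff (.atom M [x, y] [] hiar.symm (by simp [har, hiar])) (.sell x y .idE)

theorem diag_mem_sem_edge {D : Interp Name dom} {M : Name} {har : voc.ar M = 2}
    {hiar : voc.iar M = 2} {x y : V} {μ : V → dom} :
    (μ, μ) ∈ (edge M har hiar x y).sem D ↔ μ x ≠ μ y ∧ [μ x, μ y] ∈ D M := by
  simp [edge, sem, BRV.sell, BRV.AgreeOn, and_comm]

variable [Fintype V]

/-- The expression denoting the full relation, which LIF does not have as a primitive. -/
def top : LIF Name V voc := .cyll Finset.univ .idE

theorem sem_top (D : Interp Name dom) : (top : LIF Name V voc).sem D = Set.univ := by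
  ext
  simp [top, sem, BRV.cyll, BRV.AgreeOn]

/-- The intersection of a finite family of expressions, `top` if the family is empty. It is nested
in the arbitrary order of `Finset.toList`, which has no effect on the semantics. -/
noncomputable def biInter {ι : Type*} (s : Finset ι) (β : ι → LIF Name V voc) : LIF Name V voc :=
  (s.toList.map β).foldr .inter top

theorem sem_foldr_inter (D : Interp Name dom) (l : List (LIF Name V voc)) :
    (l.foldr .inter top).sem D = {p | ∀ α ∈ l, p ∈ α.sem D} := by
  induction l with
  | nil => simp [sem_top]
  | cons α l ih =>
    ext
    simp [sem, ih]

theorem mem_sem_biInter {ι : Type*} {D : Interp Name dom} {s : Finset ι}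
    {β : ι → LIF Name V voc} {p : (V → dom) × (V → dom)} :
    p ∈ (biInter s β).sem D ↔ ∀ i ∈ s, p ∈ (β i).sem D := by
  simp [biInter, sem_foldr_inter]

open Classical in
/-- The relation between `ν₁` and `μ` saying that `μ x = ν₁ y` whenever `f x` is the left copy of
`y`. It is the part of `μ = Sum.elim ν₁ ν₂ ∘ f` that does not mention `ν₂`. -/
noncomputable def gatherLeft (f : V → V ⊕ V) : LIF Name V voc :=
  biInter {p : V × V | f p.1 = .inl p.2} fun p => .sellr p.2 p.1 top

open Classical in
/-- The relation between `μ` and `ν₂` saying that `μ x = ν₂ y` whenever `f x` is the right copy of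
`y`. It is the part of `μ = Sum.elim ν₁ ν₂ ∘ f` that does not mention `ν₁`. -/
noncomputable def gatherRight (f : V → V ⊕ V) : LIF Name V voc :=
  biInter {p : V × V | f p.1 = .inr p.2} fun p => .sellr p.1 p.2 top

theorem mem_sem_gatherLeft {D : Interp Name dom} {f : V → V ⊕ V} {ν₁ μ : V → dom} :
    (ν₁, μ) ∈ (gatherLeft f : LIF Name V voc).sem D ↔ ∀ x y, f x = .inl y → ν₁ y = μ x := by
  simp [gatherLeft, mem_sem_biInter, sem, BRV.sellr, sem_top]

theorem mem_sem_gatherRight {D : Interp Name dom} {f : V → V ⊕ V} {μ ν₂ : V → dom} :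
    (μ, ν₂) ∈ (gatherRight f : LIF Name V voc).sem D ↔ ∀ x y, f x = .inr y → μ x = ν₂ y := by
  simp [gatherRight, mem_sem_biInter, sem, BRV.sellr, sem_top]

/-- The expression evaluating `β`, as a test on a single valuation, at `Sum.elim ν₁ ν₂ ∘ f`. This is
how a test on the variables `V` is applied to values taken from both ends of a pair `(ν₁, ν₂)`,
whose entries are indexed by `V ⊕ V`. Because of the intersection with `idE`, only the diagonal of
`β` matters. -/
noncomputable def pullback (f : V → V ⊕ V) (β : LIF Name V voc) : LIF Name V voc :=
  .comp (gatherLeft f) (.comp (.inter .idE β) (gatherRight f))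

theorem mem_sem_pullback {D : Interp Name dom} {f : V → V ⊕ V} {β : LIF Name V voc}
    {ν₁ ν₂ : V → dom} :
    (ν₁, ν₂) ∈ (pullback f β).sem D ↔ (Sum.elim ν₁ ν₂ ∘ f, Sum.elim ν₁ ν₂ ∘ f) ∈ β.sem D := by
  calc (ν₁, ν₂) ∈ (pullback f β).sem D
      ↔ ∃ μ, (ν₁, μ) ∈ (gatherLeft f : LIF Name V voc).sem D ∧
          (μ, μ) ∈ β.sem D ∧ (μ, ν₂) ∈ (gatherRight f : LIF Name V voc).sem D := by
        simp [pullback, sem, BRV.comp, and_assoc]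
    _ ↔ ∃ μ, μ = Sum.elim ν₁ ν₂ ∘ f ∧ (μ, μ) ∈ β.sem D := by
        simp only [mem_sem_gatherLeft, mem_sem_gatherRight, eq_sumElim_comp_iff, and_right_comm,
          and_assoc]
    _ ↔ _ := exists_eq_left

open Classical in
/-- The clique expression: for any two distinct entries of the pair of valuations, indexed by
`V ⊕ V`, it copies them to the variables `u` and `v` and performs the test `edge` there. -/
noncomputable def clique (M : Name) (har : voc.ar M = 2) (hiar : voc.iar M = 2) (u v : V) :
    LIF Name V voc :=
  biInter (Finset.univ : Finset (V ⊕ V)).offDiag fun p =>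
    pullback (Function.update (fun _ => p.2) u p.1) (edge M har hiar u v)

theorem mem_sem_clique {D : Interp Name dom} {M : Name} {har : voc.ar M = 2}
    {hiar : voc.iar M = 2} {u v : V} (huv : u ≠ v) {ν₁ ν₂ : V → dom} :
    (ν₁, ν₂) ∈ (clique M har hiar u v).sem D ↔
      Pairwise fun i j : V ⊕ V => Sum.elim ν₁ ν₂ i ≠ Sum.elim ν₁ ν₂ j ∧
        [Sum.elim ν₁ ν₂ i, Sum.elim ν₁ ν₂ j] ∈ D M := by
  simp [clique, mem_sem_biInter, mem_sem_pullback, diag_mem_sem_edge, huv.symm, Pairwise]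

end LIF

theorem ncard_range_eq_card_iff {ι α : Type*} [Finite ι] {f : ι → α} :
    (Set.range f).ncard = Nat.card ι ↔ Function.Injective f := by
  rw [← Set.ncard_univ, ← Set.image_univ, Set.ncard_image_iff, Set.injOn_univ]

theorem isKClique_range_iff {ι dom : Type*} [Finite ι] {R : Set (List dom)} {f : ι → dom} :
    IsKClique R (Set.range f) (Nat.card ι) ↔ Pairwise fun i j => f i ≠ f j ∧ [f i, f j] ∈ R := by
  rw [IsKClique, ncard_range_eq_card_iff]
  constructor
  · rintro ⟨inj, rel⟩ i j hij
    exact ⟨inj.ne hij, rel _ ⟨i, rfl⟩ _ ⟨j, rfl⟩ (inj.ne hij)⟩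
  · refine fun h => ⟨Function.injective_iff_pairwise_ne.mpr fun i j hij => (h hij).1, ?_⟩
    rintro _ ⟨i, rfl⟩ _ ⟨j, rfl⟩ hne
    exact (h (ne_of_apply_ne f hne)).2

theorem stmt18_general (V : Type*) {Name : Type*} [Fintype V] [Nontrivial V] {voc : Vocab Name}
    (M : Name) (har : voc.ar M = 2) (hiar : voc.iar M = 2) :
    ∃ α : LIF Name V voc, ∀ (dom : Type*) (D : Interp Name dom),
      α.sem D =
        {p | IsKClique (D M) (Set.range p.1 ∪ Set.range p.2) (2 * Fintype.card V)} := by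
  obtain ⟨u, v, huv⟩ := exists_pair_ne V
  refine ⟨.clique M har hiar u v, fun dom D => Set.ext fun ⟨ν₁, ν₂⟩ => ?_⟩
  rw [LIF.mem_sem_clique huv, ← isKClique_range_iff, Set.Sum.elim_range, Nat.card_sum, ← two_mul,
    Nat.card_eq_fintype_card, Set.mem_ofPred_eq]

theorem stmt18 (V dom : Type*) [Countable dom] [Infinite dom] [Fintype V]
    (n : ℕ) (hn : 2 ≤ n) (hV : Fintype.card V = n)
    (voc : Vocab Unit) (har : voc.ar () = 2) (hiar : voc.iar () = 2) :
    ∃ α : LIF Unit V voc, ∀ D : Interp Unit dom,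
      α.sem D = {p | IsKClique (D ()) (Set.range p.1 ∪ Set.range p.2) (2 * n)} := by
  subst hV
  have : Nontrivial V := Fintype.one_lt_card_iff_nontrivial.mp hn
  exact (stmt18_general V () har hiar).imp fun _ hα => hα dom
end

section
/- Suppose the set of variables V = {x1,…,xn} is finite with n ≥ 2, and the module vocabulary consists of a single module name R with ar(R) = iar(R) = 2. If α_{2n} is a LIF expression such that for every interpretation D, ⟦α_{2n}⟧_D = {(ν1,ν2) : ν1(V) ∪ ν2(V) is a 2n-clique in D(R)} (where ν(V) denotes the image of V under ν), then for every interpretation D, ⟦(α_{2n} ; α_{2n}) ∩ α_{2n}⟧_D is nonempty if and only if D(R) contains a 3n-clique. -/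
/-!
A pair of valuations on `n` variables has at most `2n` values, so its values form a `2n`-clique
exactly when the `2n` values are pairwise distinct and related: this is a condition on pairs of
positions. A pair in `(A ; A) ∩ A` amounts to three valuations, any two of which satisfy this
condition. Any two of the `3n` positions lie in two of the three valuations, so all `3n` values are
then pairwise distinct and related; conversely, cut a `3n`-clique into three valuations.
-/

/-- `f` enumerates a clique of `R` without repetition: the values of `f` at distinct indices are
distinct and related. Asking for distinctness along with `R` turns both the size condition and the
clique condition of `IsKClique` into statements about pairs of indices. -/
def IsCliqueFamily {ι dom : Type*} (R : Set (List dom)) (f : ι → dom) : Prop :=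
  Pairwise fun i j => f i ≠ f j ∧ [f i, f j] ∈ R

section Clique

variable {ι κ V dom : Type*} {R : Set (List dom)}

theorem ncard_range_eq_natCard_iff [Finite ι] {f : ι → dom} :
    (Set.range f).ncard = Nat.card ι ↔ Function.Injective f := by
  rw [← Set.image_univ, ← Set.ncard_univ, Set.ncard_image_iff Set.finite_univ, Set.injOn_univ]

theorem isKClique_range_iff_s19 [Finite ι] {f : ι → dom} :
    IsKClique R (Set.range f) (Nat.card ι) ↔ IsCliqueFamily R f := by
  rw [IsKClique, ncard_range_eq_natCard_iff]
  constructor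
  · rintro ⟨hinj, hR⟩ i j hij
    have hne : f i ≠ f j := hinj.ne hij
    exact ⟨hne, hR _ ⟨i, rfl⟩ _ ⟨j, rfl⟩ hne⟩
  · intro hf
    refine ⟨Function.injective_iff_pairwise_ne.2 fun i j hij => (hf hij).1, ?_⟩
    rintro _ ⟨i, rfl⟩ _ ⟨j, rfl⟩ hne
    exact (hf (ne_of_apply_ne f hne)).2

theorem isKClique_range_union_range_iff [Finite ι] [Finite κ] {f : ι → dom} {g : κ → dom} :
    IsKClique R (Set.range f ∪ Set.range g) (Nat.card ι + Nat.card κ) ↔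
      IsCliqueFamily R (Sum.elim f g) := by
  rw [← Set.Sum.elim_range, ← Nat.card_sum, isKClique_range_iff_s19]

theorem exists_isKClique_natCard_iff [Finite ι] :
    (∃ L, IsKClique R L (Nat.card ι)) ↔ ∃ f : ι → dom, IsCliqueFamily R f := by
  refine ⟨?_, fun ⟨f, hf⟩ => ⟨Set.range f, isKClique_range_iff_s19.2 hf⟩⟩
  rintro ⟨L, hL⟩
  -- An infinite `L` has `ncard` zero, so it is a junk `0`-clique.
  cases isEmpty_or_nonempty ι with
  | inl _ => exact ⟨isEmptyElim, fun i => isEmptyElim i⟩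
  | inr _ =>
    have : Finite L := Set.finite_of_ncard_pos (hL.1 ▸ Nat.card_pos)
    obtain ⟨e⟩ : Nonempty (ι ≃ L) := Finite.card_eq.1 hL.1.symm
    refine ⟨Subtype.val ∘ e, isKClique_range_iff_s19.1 ?_⟩
    rwa [e.surjective.range_comp, Subtype.range_coe]

namespace IsCliqueFamily

theorem comp {f : ι → dom} (hf : IsCliqueFamily R f) {e : κ → ι} (he : Function.Injective e) :
    IsCliqueFamily R (f ∘ e) :=
  fun _ _ hij => hf (he.ne hij)

theorem uncurry_iff [Nontrivial κ] {ν : κ → V → dom} :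
    IsCliqueFamily R (Function.uncurry ν) ↔
      ∀ i j, i ≠ j → IsCliqueFamily R (Sum.elim (ν i) (ν j)) := by
  constructor
  · intro hν i j hij
    have he : Function.Injective (Sum.elim (Prod.mk i) (Prod.mk j) : V ⊕ V → κ × V) :=
      (Prod.mk_right_injective i).sumElim (Prod.mk_right_injective j)
        fun _ _ h => hij (congrArg Prod.fst h)
    have hcomp : Function.uncurry ν ∘ Sum.elim (Prod.mk i) (Prod.mk j) = Sum.elim (ν i) (ν j) :=
      Sum.comp_elim _ _ _
    exact hcomp ▸ hν.comp he
  · rintro hν ⟨i, v⟩ ⟨j, w⟩ hne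
    obtain rfl | hij := eq_or_ne i j
    · have hvw : v ≠ w := fun h => hne (congrArg (Prod.mk i) h)
      obtain ⟨k, hk⟩ := exists_ne i
      exact hν i k hk.symm (Sum.inl_injective.ne hvw)
    · exact hν i j hij Sum.inl_ne_inr

end IsCliqueFamily

end Clique

theorem BRV.nonempty_comp_self_inter_iff {V dom : Type*} {A : BRV V dom}
    (hA : ∀ f g, (f, g) ∈ A → (g, f) ∈ A) :
    (BRV.comp A A ∩ A).Nonempty ↔ ∃ ν : Fin 3 → V → dom, ∀ i j, i ≠ j → (ν i, ν j) ∈ A := by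
  constructor
  · rintro ⟨⟨f, h⟩, ⟨g, hfg, hgh⟩, hfh⟩
    refine ⟨![f, g, h], fun i j hij => ?_⟩
    fin_cases i <;> fin_cases j <;> try exact absurd rfl hij
    exacts [hfg, hfh, hA _ _ hfg, hgh, hA _ _ hfh, hA _ _ hgh]
  · rintro ⟨ν, hν⟩
    exact ⟨(ν 0, ν 2), ⟨ν 1, hν 0 1 (by decide), hν 1 2 (by decide)⟩, hν 0 2 (by decide)⟩

theorem stmt19_general {V dom : Type*} [Finite V] {R : Set (List dom)} {A : BRV V dom}
    (hA : A = {p | IsKClique R (Set.range p.1 ∪ Set.range p.2) (2 * Nat.card V)}) :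
    (BRV.comp A A ∩ A).Nonempty ↔ ∃ L : Set dom, IsKClique R L (3 * Nat.card V) := by
  have mem_iff (f g : V → dom) : (f, g) ∈ A ↔ IsCliqueFamily R (Sum.elim f g) := by
    rw [hA, Set.mem_ofPred_eq, two_mul, isKClique_range_union_range_iff]
  have card_eq : 3 * Nat.card V = Nat.card (Fin 3 × V) := by
    rw [Nat.card_prod, Nat.card_fin]
  have symm (f g : V → dom) : (f, g) ∈ A → (g, f) ∈ A := by
    simpa only [hA, Set.mem_ofPred_eq, Set.union_comm] using id
  calc (BRV.comp A A ∩ A).Nonempty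
      ↔ ∃ ν : Fin 3 → V → dom, ∀ i j, i ≠ j → (ν i, ν j) ∈ A :=
        BRV.nonempty_comp_self_inter_iff symm
    _ ↔ ∃ ν : Fin 3 → V → dom, IsCliqueFamily R (Function.uncurry ν) := by
        simp only [mem_iff, IsCliqueFamily.uncurry_iff]
    _ ↔ ∃ f : Fin 3 × V → dom, IsCliqueFamily R f :=
        (Equiv.curry (Fin 3) V dom).symm.surjective.exists.symm
    _ ↔ ∃ L : Set dom, IsKClique R L (3 * Nat.card V) := by
        rw [card_eq, exists_isKClique_natCard_iff]

theorem stmt19 (V dom : Type*) [Countable dom] [Infinite dom] [Fintype V]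
    (n : ℕ) (hn : 2 ≤ n) (hV : Fintype.card V = n)
    (voc : Vocab Unit) (har : voc.ar () = 2) (hiar : voc.iar () = 2)
    (α : LIF Unit V voc)
    (hα : ∀ D : Interp Unit dom,
      α.sem D = {p | IsKClique (D ()) (Set.range p.1 ∪ Set.range p.2) (2 * n)}) :
    ∀ D : Interp Unit dom,
      ((LIF.inter (LIF.comp α α) α).sem D).Nonempty ↔
        ∃ L : Set dom, IsKClique (D ()) L (3 * n) := by
  intro D
  obtain rfl : Nat.card V = n := Nat.card_eq_fintype_card.trans hV
  exact stmt19_general (hα D)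
end
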